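/- arXiv:1708.06605 — 2 statements merged into one kernel-verified Lean document; each statement's English description precedes it below -/
import Mathlib

section
/- Let λ > 0, let α be a real number with 0 < α < 1, and let x ∈ ℝ. Then the improper integral lim_{T→∞} (1/Γ(α)) ∫_{−T}^x sin(λτ) (x−τ)^{α−1} dτ exists and equals λ^{−α} sin(λx − απ/2); that is, the distributional differintegral of order α of sin(λz) is |λ|^{−α} sin(λz − απ/2). -/
open Real Filter Topology

open MeasureTheory Set ProbabilityTheory

/-- The integrand of the Laplace transform of `t ^ (a - 1)` is integrable on the right half
plane. -/
lemma integrableOn_rpow_mul_cexp_neg_mul {a : ℝ} (ha : 0 < a) {r : ℂ} (hr : 0 < r.re) :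
    IntegrableOn (fun t : ℝ ↦ ((t ^ (a - 1) : ℝ) : ℂ) * Complex.exp (-(r * t))) (Ioi 0) := by
  have h := integrableOn_rpow_mul_exp_neg_mul_rpow (s := a - 1) (by linarith) one_pos hr
  refine Integrable.mono' h (by fun_prop) ?_
  refine (ae_restrict_mem measurableSet_Ioi).mono fun t (ht : 0 < t) ↦ ?_
  rw [norm_mul, Complex.norm_real, Real.norm_of_nonneg (by positivity), Complex.norm_exp]
  simp

/-- The Laplace transform of `t ^ (a - 1)` at a complex point of the right half plane. -/
lemma integral_rpow_mul_cexp_neg_mul_Ioi {a : ℝ} (ha : 0 < a) {r : ℂ} (hr : 0 < r.re) :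
    ∫ t : ℝ in Ioi 0, ((t ^ (a - 1) : ℝ) : ℂ) * Complex.exp (-(r * t)) =
      Real.Gamma a * r ^ (-a : ℂ) := by
  set μ : Measure ℝ :=
    (volume.restrict (Ioi 0)).withDensity fun t ↦ ENNReal.ofReal (t ^ (a - 1)) with hμ
  have hmeas : Measurable fun t : ℝ ↦ ENNReal.ofReal (t ^ (a - 1)) := by fun_prop
  have hmgf (z : ℂ) : complexMGF id μ (-z) =
      ∫ t : ℝ in Ioi 0, ((t ^ (a - 1) : ℝ) : ℂ) * Complex.exp (-(z * t)) := by
    rw [complexMGF, hμ, integral_withDensity_eq_integral_toReal_smul hmeas (by simp)]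
    refine setIntegral_congr_fun measurableSet_Ioi fun t (ht : 0 < t) ↦ ?_
    simp [ENNReal.toReal_ofReal (rpow_nonneg ht.le _)]
  have hset : Iio 0 ⊆ interior (integrableExpSet id μ) := by
    refine interior_maximal (fun s (hs : s < 0) ↦ ?_) isOpen_Iio
    rw [integrableExpSet, mem_ofPred_eq, hμ,
      integrable_withDensity_iff_integrable_smul' hmeas (by simp)]
    have h := integrableOn_rpow_mul_exp_neg_mul_rpow (s := a - 1) (by linarith) one_pos
      (neg_pos.2 hs)
    refine h.congr_fun (fun t (ht : 0 < t) ↦ ?_) measurableSet_Ioi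
    simp [ENNReal.toReal_ofReal (rpow_nonneg ht.le _)]
  set U : Set ℂ := {z | 0 < z.re} with hU
  have hUo : IsOpen U := isOpen_lt continuous_const Complex.continuous_re
  have hf : AnalyticOnNhd ℂ (fun z ↦ complexMGF id μ (-z)) U := by
    refine DifferentiableOn.analyticOnNhd (fun z hz ↦ ?_) hUo
    have h : DifferentiableAt ℂ (complexMGF id μ) (-z) :=
      (hasDerivAt_complexMGF (hset (by simpa [hU] using hz))).differentiableAt
    exact (h.comp z differentiableAt_id.neg).differentiableWithinAt
  have hg : AnalyticOnNhd ℂ (fun z : ℂ ↦ Real.Gamma a * z ^ (-a : ℂ)) U := by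
    refine DifferentiableOn.analyticOnNhd (fun z hz ↦ ?_) hUo
    exact ((differentiableAt_id.cpow_const (Or.inl hz)).const_mul _).differentiableWithinAt
  have hreal (s : ℝ) (hs : 0 < s) :
      complexMGF id μ (-(s : ℂ)) = Real.Gamma a * (s : ℂ) ^ (-a : ℂ) := by
    rw [hmgf]
    have h := Real.integral_rpow_mul_exp_neg_mul_Ioi ha hs
    rw [one_div, inv_rpow hs.le, ← rpow_neg hs.le, mul_comm] at h
    have h' := congrArg (fun y : ℝ ↦ (y : ℂ)) h
    simp only [Complex.ofReal_mul, Complex.ofReal_cpow hs.le, Complex.ofReal_neg] at h'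
    rw [← h', ← integral_complex_ofReal]
    simp
  have hfreq : ∃ᶠ z in 𝓝[≠] (1 : ℂ),
      complexMGF id μ (-z) = Real.Gamma a * z ^ (-a : ℂ) := by
    have ht : Tendsto (fun s : ℝ ↦ (s : ℂ)) (𝓝[≠] 1) (𝓝[≠] 1) := by
      refine tendsto_nhdsWithin_iff.2 ⟨?_, ?_⟩
      · exact (Complex.continuous_ofReal.tendsto' 1 1 (by simp)).mono_left nhdsWithin_le_nhds
      · filter_upwards [self_mem_nhdsWithin] with s hs
        simpa using hs
    refine ht.frequently (Eventually.frequently ?_)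
    filter_upwards [nhdsWithin_le_nhds (lt_mem_nhds (zero_lt_one (α := ℝ)))] with s hs
    exact hreal s hs
  have hconv : IsPreconnected U := (convex_halfSpace_re_gt 0).isPreconnected
  rw [← hmgf]
  exact hf.eqOn_of_preconnected_of_frequently_eq hg hconv (by simp [hU]) hfreq hr

/-- Tail estimate for the Laplace transform of `t ^ (a - 1)`, uniform up to the imaginary axis. -/
lemma norm_integral_Ioi_rpow_mul_cexp_neg_mul_le {a : ℝ} (ha : 0 < a) (ha1 : a < 1) {r : ℂ}
    (hr : 0 < r.re) {R : ℝ} (hR : 0 < R) :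
    ‖∫ t : ℝ in Ioi R, ((t ^ (a - 1) : ℝ) : ℂ) * Complex.exp (-(r * t))‖ ≤
      2 * R ^ (a - 1) / ‖r‖ := by
  have hr0 : r ≠ 0 := fun h ↦ by simp [h] at hr
  have hu (t : ℝ) (ht : t ∈ Ioi R) : HasDerivAt (fun t : ℝ ↦ ((t ^ (a - 1) : ℝ) : ℂ))
      (((a - 1) * t ^ (a - 1 - 1) : ℝ) : ℂ) t :=
    (Real.hasDerivAt_rpow_const (Or.inl (hR.trans ht).ne')).ofReal_comp
  have hv (t : ℝ) : HasDerivAt (fun t : ℝ ↦ -Complex.exp (-(r * t)) / r)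
      (Complex.exp (-(r * t))) t := by
    have h : HasDerivAt (fun t : ℝ ↦ -(r * (t : ℂ))) (-(r * 1)) t :=
      ((Complex.ofRealCLM.hasDerivAt (x := t)).const_mul r).neg
    convert! (h.cexp.neg.div_const r) using 1
    field_simp
  have hexp {t : ℝ} (ht : 0 < t) : ‖-Complex.exp (-(r * t)) / r‖ ≤ 1 / ‖r‖ := by
    rw [norm_div, norm_neg, Complex.norm_exp]
    gcongr
    simp only [Complex.neg_re, Complex.mul_re, Complex.ofReal_re, Complex.ofReal_im, mul_zero,
      sub_zero, exp_le_one_iff, Left.neg_nonpos_iff]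
    positivity
  have hbint : IntegrableOn (fun t : ℝ ↦ (1 - a) / ‖r‖ * t ^ (a - 2)) (Ioi R) :=
    (integrableOn_Ioi_rpow_of_lt (by linarith) hR).const_mul _
  have hbound : ∀ᵐ t ∂(volume.restrict (Ioi R)),
      ‖(((a - 1) * t ^ (a - 1 - 1) : ℝ) : ℂ) * (-Complex.exp (-(r * t)) / r)‖ ≤
        (1 - a) / ‖r‖ * t ^ (a - 2) := by
    refine (ae_restrict_mem measurableSet_Ioi).mono fun t ht ↦ ?_
    have ht0 : 0 < t := hR.trans ht
    rw [norm_mul, Complex.norm_real, norm_mul, Real.norm_of_nonpos (by linarith),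
      Real.norm_of_nonneg (by positivity)]
    calc -(a - 1) * t ^ (a - 1 - 1) * ‖-Complex.exp (-(r * t)) / r‖
        ≤ -(a - 1) * t ^ (a - 1 - 1) * (1 / ‖r‖) := by
          gcongr
          · exact mul_nonneg (by linarith) (by positivity)
          · exact hexp ht0
      _ = (1 - a) / ‖r‖ * t ^ (a - 2) := by
          rw [show a - 1 - 1 = a - 2 by ring]; ring
  have hcont : ContinuousAt (fun t : ℝ ↦ ((t ^ (a - 1) : ℝ) : ℂ) * (-Complex.exp (-(r * t)) / r))
      R := by
    have h : ContinuousAt (fun t : ℝ ↦ t ^ (a - 1)) R :=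
      continuousAt_rpow_const _ _ (Or.inl hR.ne')
    exact (Complex.continuous_ofReal.continuousAt.comp h).mul (by fun_prop)
  have hinfty : Tendsto (fun t : ℝ ↦ ((t ^ (a - 1) : ℝ) : ℂ) * (-Complex.exp (-(r * t)) / r))
      atTop (𝓝 0) := by
    have h : Tendsto (fun t : ℝ ↦ t ^ (a - 1) * (1 / ‖r‖)) atTop (𝓝 0) := by
      have := (tendsto_rpow_neg_atTop (y := 1 - a) (by linarith)).mul_const (1 / ‖r‖)
      simpa using this
    refine squeeze_zero_norm' ?_ h
    filter_upwards [eventually_gt_atTop 0] with t ht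
    rw [norm_mul, Complex.norm_real, Real.norm_of_nonneg (by positivity)]
    gcongr
    exact hexp ht
  have key := integral_Ioi_mul_deriv_eq_deriv_mul hu (fun t _ ↦ hv t)
    ((integrableOn_rpow_mul_cexp_neg_mul ha hr).mono_set (Ioi_subset_Ioi hR.le))
    (Integrable.mono' hbint (by fun_prop) hbound)
    (hcont.tendsto.mono_left nhdsWithin_le_nhds) hinfty
  rw [key, zero_sub]
  have h1 : ‖((R ^ (a - 1) : ℝ) : ℂ) * (-Complex.exp (-(r * R)) / r)‖ ≤ R ^ (a - 1) / ‖r‖ := by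
    rw [norm_mul, Complex.norm_real, Real.norm_of_nonneg (by positivity), div_eq_mul_one_div (R ^ _)]
    gcongr
    exact hexp hR
  have h2 := norm_integral_le_of_norm_le hbint hbound
  rw [integral_const_mul, integral_Ioi_rpow_of_lt (by linarith) hR] at h2
  have h3 : (1 - a) / ‖r‖ * (-R ^ (a - 2 + 1) / (a - 2 + 1)) = R ^ (a - 1) / ‖r‖ := by
    rw [show a - 2 + 1 = a - 1 by ring]
    have : a - 1 ≠ 0 := by linarith
    have : ‖r‖ ≠ 0 := norm_ne_zero_iff.2 hr0
    field_simp
    ring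
  refine (norm_sub_le _ _).trans ?_
  rw [norm_neg, mul_div_assoc, two_mul]
  exact add_le_add h1 (h2.trans_eq h3)

/-- The improper oscillatory integral of `t ^ (a - 1) * exp (-i l t)`. -/
lemma tendsto_integral_rpow_mul_cexp_neg_I_mul {a l : ℝ} (ha : 0 < a) (ha1 : a < 1)
    (hl : 0 < l) :
    Tendsto (fun R : ℝ ↦ ∫ t in (0 : ℝ)..R,
        ((t ^ (a - 1) : ℝ) : ℂ) * Complex.exp (-((l * Complex.I) * t))) atTop
      (𝓝 (Real.Gamma a * (l * Complex.I) ^ (-a : ℂ))) := by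
  have hlim : Tendsto (fun ε : ℝ ↦ (ε : ℂ) + l * Complex.I) (𝓝[>] 0) (𝓝 (l * Complex.I)) := by
    refine Tendsto.mono_left ?_ nhdsWithin_le_nhds
    exact Continuous.tendsto' (by fun_prop) _ _ (by simp)
  have hbound (R : ℝ) (hR : 0 < R) :
      ‖(∫ t in (0 : ℝ)..R, ((t ^ (a - 1) : ℝ) : ℂ) * Complex.exp (-((l * Complex.I) * t))) -
        Real.Gamma a * (l * Complex.I) ^ (-a : ℂ)‖ ≤ 2 * R ^ (a - 1) / l := by
    have hF : Tendsto (fun ε : ℝ ↦ ∫ t in (0 : ℝ)..R,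
        ((t ^ (a - 1) : ℝ) : ℂ) * Complex.exp (-(((ε : ℂ) + l * Complex.I) * t))) (𝓝[>] 0)
        (𝓝 (∫ t in (0 : ℝ)..R,
          ((t ^ (a - 1) : ℝ) : ℂ) * Complex.exp (-((l * Complex.I) * t)))) := by
      refine intervalIntegral.tendsto_integral_filter_of_dominated_convergence
        (fun t ↦ t ^ (a - 1)) (Eventually.of_forall fun ε ↦ by fun_prop) ?_
        (intervalIntegral.intervalIntegrable_rpow' (by linarith)) ?_
      · filter_upwards [self_mem_nhdsWithin] with ε (hε : 0 < ε)
        refine Eventually.of_forall fun t ht ↦ ?_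
        rw [uIoc_of_le hR.le] at ht
        have ht0 : 0 < t := ht.1
        rw [norm_mul, Complex.norm_real, Real.norm_of_nonneg (by positivity), Complex.norm_exp]
        refine mul_le_of_le_one_right (by positivity) ?_
        simp
        positivity
      · refine Eventually.of_forall fun t _ ↦ Tendsto.const_mul _ ?_
        exact (Complex.continuous_exp.tendsto _).comp (hlim.mul_const _).neg
    have hG : Tendsto (fun ε : ℝ ↦ (Real.Gamma a : ℂ) * ((ε : ℂ) + l * Complex.I) ^ (-a : ℂ))
        (𝓝[>] 0) (𝓝 (Real.Gamma a * (l * Complex.I) ^ (-a : ℂ))) := by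
      have h : ContinuousAt (fun z : ℂ ↦ z ^ (-a : ℂ)) (l * Complex.I) :=
        continuousAt_cpow_const (Or.inr (by simpa using hl.ne'))
      exact (h.tendsto.comp hlim).const_mul _
    refine le_of_tendsto (hF.sub hG).norm ?_
    filter_upwards [self_mem_nhdsWithin] with ε (hε : 0 < ε)
    have hre : 0 < ((ε : ℂ) + l * Complex.I).re := by simpa using hε
    have hint := integrableOn_rpow_mul_cexp_neg_mul ha hre
    rw [← integral_rpow_mul_cexp_neg_mul_Ioi ha hre, norm_sub_rev,
      ← intervalIntegral.integral_Ioi_sub_Ioi hint hR.le, sub_sub_cancel]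
    refine (norm_integral_Ioi_rpow_mul_cexp_neg_mul_le ha ha1 hre hR).trans ?_
    gcongr
    simpa [abs_of_pos hl] using Complex.abs_im_le_norm ((ε : ℂ) + l * Complex.I)
  rw [tendsto_iff_norm_sub_tendsto_zero]
  have h : Tendsto (fun R : ℝ ↦ 2 * R ^ (a - 1) / l) atTop (𝓝 0) := by
    have := ((tendsto_rpow_neg_atTop (y := 1 - a) (by linarith)).const_mul 2).div_const l
    simpa using this
  refine squeeze_zero' (Eventually.of_forall fun _ ↦ norm_nonneg _) ?_ h
  filter_upwards [eventually_gt_atTop 0] with R hR using hbound R hR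

/-- Polar form of a real power of a point on the positive imaginary axis. -/
lemma ofReal_mul_I_cpow_neg {l : ℝ} (hl : 0 < l) (a : ℝ) :
    ((l : ℂ) * Complex.I) ^ (-a : ℂ) =
      ((l ^ (-a) : ℝ) : ℂ) * Complex.exp (((-(a * π / 2) : ℝ) : ℂ) * Complex.I) := by
  have hl' : (l : ℂ) ≠ 0 := Complex.ofReal_ne_zero.2 hl.ne'
  rw [Complex.cpow_def_of_ne_zero (mul_ne_zero hl' Complex.I_ne_zero),
    Complex.log_ofReal_mul hl Complex.I_ne_zero, Complex.log_I, rpow_def_of_pos hl,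
    Complex.ofReal_exp, ← Complex.exp_add]
  congr 1
  push_cast
  ring

/-- The improper distributional differintegral of order `α ∈ (0,1)` of `sin(λz)` exists
and equals `λ^(−α) sin(λz − απ/2)`. -/
theorem differintegral_sin (lam α x : ℝ) (hlam : 0 < lam) (hα0 : 0 < α) (hα1 : α < 1) :
    Tendsto (fun T : ℝ => (1 / Real.Gamma α) * ∫ τ in (-T)..x,
        Real.sin (lam * τ) * (x - τ) ^ (α - 1)) atTop
      (𝓝 (lam ^ (-α) * Real.sin (lam * x - α * π / 2))) := by
  have hΓ : Real.Gamma α ≠ 0 := (Real.Gamma_pos_of_pos hα0).ne'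
  have hint (T : ℝ) : ∫ τ in (-T)..x, Real.sin (lam * τ) * (x - τ) ^ (α - 1) =
      (Complex.exp ((lam * x : ℝ) * Complex.I) * ∫ t in (0 : ℝ)..(x + T),
        ((t ^ (α - 1) : ℝ) : ℂ) * Complex.exp (-((lam * Complex.I) * t))).im := by
    have hsub := intervalIntegral.integral_comp_sub_left (a := -T) (b := x)
      (fun t ↦ Real.sin (lam * (x - t)) * t ^ (α - 1)) x
    simp only [sub_sub_cancel, sub_self, sub_neg_eq_add] at hsub
    have hii : IntervalIntegrable (fun t : ℝ ↦ Complex.exp ((lam * x : ℝ) * Complex.I) *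
        (((t ^ (α - 1) : ℝ) : ℂ) * Complex.exp (-((lam * Complex.I) * t)))) volume 0 (x + T) := by
      refine IntervalIntegrable.const_mul (IntervalIntegrable.mul_continuousOn ?_
        (by fun_prop)) _
      have h : IntervalIntegrable (fun t : ℝ ↦ t ^ (α - 1)) volume 0 (x + T) :=
        intervalIntegral.intervalIntegrable_rpow' (by linarith)
      exact ⟨h.1.ofReal, h.2.ofReal⟩
    rw [hsub, ← intervalIntegral.integral_const_mul]
    have him := Complex.imCLM.intervalIntegral_comp_comm hii
    simp only [Complex.imCLM_apply] at him
    rw [← him]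
    congr 1 with t
    have he : Complex.exp ((lam * x : ℝ) * Complex.I) *
        (((t ^ (α - 1) : ℝ) : ℂ) * Complex.exp (-((lam * Complex.I) * t))) =
        ((t ^ (α - 1) : ℝ) : ℂ) * Complex.exp (((lam * (x - t) : ℝ) : ℂ) * Complex.I) := by
      rw [mul_left_comm, ← Complex.exp_add]
      congr 2
      push_cast
      ring
    rw [he, Complex.im_ofReal_mul, Complex.exp_ofReal_mul_I_im, mul_comm]
  have hlim := ((tendsto_integral_rpow_mul_cexp_neg_I_mul hα0 hα1 hlam).comp
    (tendsto_atTop_add_const_left atTop x tendsto_id)).const_mul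
      (Complex.exp ((lam * x : ℝ) * Complex.I))
  have hlim' := ((Complex.continuous_im.tendsto _).comp hlim).const_mul (1 / Real.Gamma α)
  have hval : 1 / Real.Gamma α * (Complex.exp ((lam * x : ℝ) * Complex.I) *
      (Real.Gamma α * (lam * Complex.I) ^ (-α : ℂ))).im =
      lam ^ (-α) * Real.sin (lam * x - α * π / 2) := by
    have he : Complex.exp ((lam * x : ℝ) * Complex.I) *
        (Real.Gamma α * (lam * Complex.I) ^ (-α : ℂ)) = ((Real.Gamma α * lam ^ (-α) : ℝ) : ℂ) *
          Complex.exp (((lam * x - α * π / 2 : ℝ) : ℂ) * Complex.I) := by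
      rw [ofReal_mul_I_cpow_neg hlam, mul_left_comm, mul_left_comm (Complex.exp _),
        ← Complex.exp_add, Complex.ofReal_mul (Real.Gamma α), mul_assoc]
      congr 3
      push_cast
      ring
    rw [he, Complex.im_ofReal_mul, Complex.exp_ofReal_mul_I_im]
    field_simp
  rw [hval] at hlim'
  refine hlim'.congr fun T ↦ ?_
  rw [hint]
  rfl
end

section
/- Let λ > 0, let α be a real number with 0 < α < 1, and let x ∈ ℝ. Then the improper integral lim_{T→∞} (1/Γ(α)) ∫_{−T}^x cos(λτ) (x−τ)^{α−1} dτ exists and equals λ^{−α} cos(λx − απ/2); that is, the distributional differintegral of order α of cos(λz) is |λ|^{−α} cos(λz − απ/2). -/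
open Real Filter Topology

/-- The lower incomplete Gamma integral rescaled to the unit interval:
`z ^ α * scaledLowerGamma α z = γ(α, z)`. -/
noncomputable def scaledLowerGamma (α : ℝ) (z : ℂ) : ℂ :=
  ∫ t in (0 : ℝ)..1, ((t ^ (α - 1) : ℝ) : ℂ) * Complex.exp (-z * t)

lemma intervalIntegrable_rpow_mul_cexp {r : ℝ} (hr : -1 < r) (z : ℂ) (a b : ℝ) :
    IntervalIntegrable (fun t : ℝ => ((t ^ r : ℝ) : ℂ) * Complex.exp (-z * t))
      MeasureTheory.volume a b :=
  have hpow : IntervalIntegrable (fun t : ℝ => t ^ r) MeasureTheory.volume a b :=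
    intervalIntegral.intervalIntegrable_rpow' hr
  IntervalIntegrable.mul_continuousOn ⟨hpow.1.ofReal, hpow.2.ofReal⟩ (by fun_prop)

lemma hasDerivAt_scaledLowerGamma {α : ℝ} (hα : 0 < α) (z : ℂ) :
    HasDerivAt (scaledLowerGamma α)
      (∫ t in (0 : ℝ)..1, -(((t ^ α : ℝ) : ℂ) * Complex.exp (-z * t))) z := by
  refine (intervalIntegral.hasDerivAt_integral_of_dominated_loc_of_deriv_le
    (μ := MeasureTheory.volume)
    (F := fun (w : ℂ) (t : ℝ) => ((t ^ (α - 1) : ℝ) : ℂ) * Complex.exp (-w * t))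
    (F' := fun (w : ℂ) (t : ℝ) => -(((t ^ α : ℝ) : ℂ) * Complex.exp (-w * t)))
    (bound := fun _ => Real.exp (‖z‖ + 1))
    (Metric.ball_mem_nhds z one_pos) ?_
    (intervalIntegrable_rpow_mul_cexp (by linarith) z 0 1) ?_ ?_ (by simp) ?_).2
  · refine .of_forall fun w => ?_
    exact (intervalIntegrable_rpow_mul_cexp (by linarith) w 0 1).def'.aestronglyMeasurable
  · exact (intervalIntegrable_rpow_mul_cexp (by linarith) z 0 1).neg.def'.aestronglyMeasurable
  · refine .of_forall fun t ht w hw => ?_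
    rw [Set.uIoc_of_le zero_le_one] at ht
    rw [norm_neg, norm_mul, Complex.norm_real, Real.norm_of_nonneg (rpow_nonneg ht.1.le _),
      Complex.norm_exp]
    have hpow : t ^ α ≤ 1 := rpow_le_one ht.1.le ht.2 hα.le
    have hw' : ‖w‖ ≤ ‖z‖ + 1 := by
      have := norm_sub_norm_le w z
      have := mem_ball_iff_norm.1 hw
      linarith
    have hre : (-w * (t : ℂ)).re ≤ ‖z‖ + 1 := by
      refine (Complex.re_le_norm _).trans ?_
      rw [norm_mul, norm_neg, Complex.norm_real, Real.norm_of_nonneg ht.1.le]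
      exact (mul_le_of_le_one_right (norm_nonneg _) ht.2).trans hw'
    calc t ^ α * Real.exp (-w * (t : ℂ)).re ≤ 1 * Real.exp (‖z‖ + 1) := by gcongr
      _ = _ := one_mul _
  · refine .of_forall fun t ht w _ => ?_
    rw [Set.uIoc_of_le zero_le_one] at ht
    have hlin : HasDerivAt (fun w : ℂ => -w * (t : ℂ)) (-1 * (t : ℂ)) w :=
      (hasDerivAt_neg w).mul_const _
    convert! hlin.cexp.const_mul ((t ^ (α - 1) : ℝ) : ℂ) using 1
    have hpow : t ^ α = t ^ (α - 1) * t := by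
      rw [← rpow_add_one ht.1.ne', sub_add_cancel]
    rw [hpow]
    push_cast
    ring

lemma scaledLowerGamma_ode {α : ℝ} (hα : 0 < α) (z : ℂ) :
    α * scaledLowerGamma α z
      + z * ∫ t in (0 : ℝ)..1, -(((t ^ α : ℝ) : ℂ) * Complex.exp (-z * t))
      = Complex.exp (-z) := by
  have hint₁ := (intervalIntegrable_rpow_mul_cexp (r := α - 1) (by linarith) z 0 1).const_mul
    (α : ℂ)
  have hint₂ := (intervalIntegrable_rpow_mul_cexp (r := α) (by linarith) z 0 1).neg.const_mul z
  have hftc := intervalIntegral.integral_eq_sub_of_hasDerivAt_of_le zero_le_one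
    (f := fun t : ℝ => ((t ^ α : ℝ) : ℂ) * Complex.exp (-z * t)) ?_ ?_ (hint₁.add hint₂)
  · rw [intervalIntegral.integral_add hint₁ hint₂, intervalIntegral.integral_const_mul,
      intervalIntegral.integral_const_mul] at hftc
    simpa [scaledLowerGamma, zero_rpow hα.ne'] using hftc
  · have := continuous_rpow_const (q := α) hα.le
    fun_prop
  · intro t ht
    have hpow := (hasDerivAt_rpow_const (p := α) (Or.inl ht.1.ne')).ofReal_comp
    have hlin : HasDerivAt (fun t : ℝ => -z * (t : ℂ)) (-z * 1) t :=
      (hasDerivAt_id t).ofReal_comp.const_mul _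
    convert! hpow.mul hlin.cexp using 1
    simp only [Pi.neg_apply]
    push_cast
    ring

/-- Jordan-type estimate: rotating the ray of integration from `R` to `I * R`. -/
lemma norm_scaledLowerGamma_rotate_sub_le {α : ℝ} (hα : 0 < α) {R : ℝ} (hR : 0 < R) :
    ‖Complex.exp ((α * (π / 2) : ℝ) * Complex.I) * scaledLowerGamma α (R * Complex.I)
      - scaledLowerGamma α R‖ ≤ π / (2 * R) := by
  let ray : ℝ → ℂ := fun θ => R * Complex.exp (θ * Complex.I)
  let K : ℝ → ℂ := fun θ => Complex.exp (α * (θ * Complex.I)) * scaledLowerGamma α (ray θ)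
  have hI (θ : ℝ) : HasDerivAt (fun θ : ℝ => (θ : ℂ) * Complex.I) (1 * Complex.I) θ :=
    (hasDerivAt_id θ).ofReal_comp.mul_const _
  have hray (θ : ℝ) : HasDerivAt ray (ray θ * Complex.I) θ := by
    convert! (hI θ).cexp.const_mul (R : ℂ) using 1
    simp only [ray]
    ring
  have hK (θ : ℝ) : HasDerivAt K
      (Complex.exp (α * (θ * Complex.I)) * Complex.I * Complex.exp (-ray θ)) θ := by
    convert! ((hI θ).const_mul (α : ℂ)).cexp.mul
      ((hasDerivAt_scaledLowerGamma hα (ray θ)).comp θ (hray θ)) using 1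
    rw [← scaledLowerGamma_ode hα (ray θ)]
    simp only [Function.comp_apply]
    ring
  let B : ℝ → ℝ := fun θ => π / (2 * R) * Real.exp (-R * (1 - 2 / π * θ))
  have hB (θ : ℝ) : HasDerivAt B (Real.exp (-R * (1 - 2 / π * θ))) θ := by
    have hlin : HasDerivAt (fun θ : ℝ => -R * (1 - 2 / π * θ)) (-R * -(2 / π * 1)) θ :=
      (((hasDerivAt_id θ).const_mul (2 / π)).const_sub 1).const_mul (-R)
    convert! hlin.exp.const_mul (π / (2 * R)) using 1
    field_simp
  have hbound := image_norm_le_of_norm_deriv_right_le_deriv_boundary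
    (f := fun θ => K θ - K 0) (a := 0) (b := π / 2)
    (fun θ _ => ((hK θ).sub_const (K 0)).continuousAt.continuousWithinAt)
    (fun θ _ => ((hK θ).sub_const (K 0)).hasDerivWithinAt)
    (by simp only [sub_self, norm_zero, B]; positivity) hB ?_
    (Set.right_mem_Icc.2 (by positivity))
  · have hBend : B (π / 2) = π / (2 * R) := by
      have : -R * (1 - 2 / π * (π / 2)) = 0 := by field_simp; ring
      simp only [B, this, Real.exp_zero, mul_one]
    have hKend : K (π / 2) =
        Complex.exp ((α * (π / 2) : ℝ) * Complex.I) * scaledLowerGamma α (R * Complex.I) := by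
      have hend : Complex.exp (((π / 2 : ℝ) : ℂ) * Complex.I) = Complex.I := by
        push_cast
        exact Complex.exp_pi_div_two_mul_I
      simp only [K, ray, hend]
      push_cast
      ring_nf
    rw [hBend, hKend] at hbound
    simpa [K, ray] using hbound
  · intro θ hθ
    rw [norm_mul, norm_mul, Complex.norm_I, Complex.norm_exp, Complex.norm_exp]
    have h₁ : ((α : ℂ) * (θ * Complex.I)).re = 0 := by simp
    have h₂ : (-ray θ).re = -R * Real.cos θ := by
      simp [ray, Complex.exp_ofReal_mul_I_re]
    rw [h₁, h₂, Real.exp_zero, one_mul, one_mul]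
    have := one_sub_mul_le_cos hθ.1 hθ.2.le
    exact Real.exp_le_exp.2 (mul_le_mul_of_nonpos_left this (by linarith))

lemma tendsto_rpow_mul_scaledLowerGamma_ofReal {α : ℝ} (hα : 0 < α) :
    Tendsto (fun R : ℝ => ((R ^ α : ℝ) : ℂ) * scaledLowerGamma α R) atTop
      (𝓝 (Real.Gamma α : ℂ)) := by
  have hlim := MeasureTheory.intervalIntegral_tendsto_integral_Ioi 0
    (Real.GammaIntegral_convergent hα) tendsto_id
  rw [← Real.Gamma_eq_integral hα] at hlim
  refine (((Complex.continuous_ofReal.tendsto _).comp hlim)).congr' ?_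
  filter_upwards [eventually_gt_atTop 0] with R hR
  have hscale := intervalIntegral.mul_integral_comp_mul_left (a := 0) (b := 1)
    (f := fun x : ℝ => Real.exp (-x) * x ^ (α - 1)) (c := R)
  rw [mul_zero, mul_one] at hscale
  simp only [Function.comp_apply, id_eq]
  rw [← hscale, scaledLowerGamma, ← intervalIntegral.integral_const_mul,
    ← intervalIntegral.integral_ofReal, ← intervalIntegral.integral_const_mul]
  refine intervalIntegral.integral_congr fun t ht => ?_
  rw [Set.uIcc_of_le zero_le_one] at ht
  have hpow : R ^ α = R * R ^ (α - 1) := by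
    rw [mul_comm, ← rpow_add_one hR.ne', sub_add_cancel]
  simp only [mul_rpow hR.le ht.1, hpow]
  push_cast
  ring_nf

lemma tendsto_rpow_mul_scaledLowerGamma_mul_I {α : ℝ} (hα0 : 0 < α) (hα1 : α < 1) :
    Tendsto (fun R : ℝ => ((R ^ α : ℝ) : ℂ) * scaledLowerGamma α (R * Complex.I)) atTop
      (𝓝 (Complex.exp (-((α * (π / 2) : ℝ) * Complex.I)) * Real.Gamma α)) := by
  set c : ℂ := ((α * (π / 2) : ℝ) : ℂ) * Complex.I
  have hdiff : Tendsto (fun R : ℝ => ((R ^ α : ℝ) : ℂ) *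
      (Complex.exp c * scaledLowerGamma α (R * Complex.I) - scaledLowerGamma α R))
      atTop (𝓝 0) := by
    have hdecay : Tendsto (fun R : ℝ => π / 2 * R ^ (-(1 - α))) atTop (𝓝 0) := by
      simpa using (tendsto_rpow_neg_atTop (sub_pos.2 hα1)).const_mul (π / 2)
    refine squeeze_zero_norm' ?_ hdecay
    filter_upwards [eventually_gt_atTop 0] with R hR
    rw [norm_mul, Complex.norm_real, Real.norm_of_nonneg (rpow_nonneg hR.le _)]
    calc _ ≤ R ^ α * (π / (2 * R)) := by
          gcongr
          exact norm_scaledLowerGamma_rotate_sub_le hα0 hR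
      _ = _ := by
          rw [neg_sub, rpow_sub_one hR.ne']
          field_simp
  have hsum := (hdiff.add (tendsto_rpow_mul_scaledLowerGamma_ofReal hα0)).const_mul
    (Complex.exp (-c))
  rw [zero_add] at hsum
  refine hsum.congr fun R => ?_
  have hc : Complex.exp (-c) * Complex.exp c = 1 := by
    rw [← Complex.exp_add, neg_add_cancel, Complex.exp_zero]
  linear_combination (((R ^ α : ℝ) : ℂ) * scaledLowerGamma α (R * Complex.I)) * hc

lemma integral_cos_mul_rpow_eq {lam α x T : ℝ} (hlam : 0 < lam) (hα0 : 0 < α)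
    (hT : 0 < x + T) :
    ∫ τ in (-T)..x, Real.cos (lam * τ) * (x - τ) ^ (α - 1) =
      lam ^ (-α) * (Complex.exp ((lam * x : ℝ) * Complex.I) *
        (((lam * (x + T)) ^ α : ℝ) *
          scaledLowerGamma α ((lam * (x + T) : ℝ) * Complex.I))).re := by
  set S := x + T with hS
  have hshift := intervalIntegral.integral_comp_sub_left (a := -T) (b := x)
    (fun u : ℝ => Real.cos (lam * (x - u)) * u ^ (α - 1)) x
  have hscale := intervalIntegral.mul_integral_comp_mul_left (a := 0) (b := 1)
    (f := fun u : ℝ => Real.cos (lam * (x - u)) * u ^ (α - 1)) (c := S)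
  simp only [sub_sub_cancel, sub_self, sub_neg_eq_add, ← hS] at hshift
  rw [mul_zero, mul_one] at hscale
  rw [hshift, ← hscale]
  have hre : (Complex.exp ((lam * x : ℝ) * Complex.I) *
      scaledLowerGamma α ((lam * S : ℝ) * Complex.I)).re =
      ∫ t in (0 : ℝ)..1, Real.cos (lam * (x - S * t)) * t ^ (α - 1) := by
    rw [scaledLowerGamma, ← intervalIntegral.integral_const_mul]
    have hint := (intervalIntegrable_rpow_mul_cexp (r := α - 1) (by linarith)
      ((lam * S : ℝ) * Complex.I) 0 1).const_mul (Complex.exp ((lam * x : ℝ) * Complex.I))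
    have := Complex.reCLM.intervalIntegral_comp_comm hint
    simp only [Complex.reCLM_apply] at this
    rw [← this]
    refine intervalIntegral.integral_congr fun t _ => ?_
    have hexp : Complex.exp ((lam * x : ℝ) * Complex.I) * (((t ^ (α - 1) : ℝ) : ℂ) *
        Complex.exp (-((lam * S : ℝ) * Complex.I) * t)) =
        ((t ^ (α - 1) : ℝ) : ℂ) * Complex.exp ((lam * (x - S * t) : ℝ) * Complex.I) := by
      rw [mul_left_comm, ← Complex.exp_add]
      push_cast
      ring_nf
    simp only [hexp, Complex.re_ofReal_mul, Complex.exp_ofReal_mul_I_re]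
    ring
  rw [mul_left_comm, Complex.re_ofReal_mul, hre, mul_rpow hlam.le hT.le, ← mul_assoc,
    ← mul_assoc, ← rpow_add hlam, neg_add_cancel, rpow_zero, one_mul,
    ← intervalIntegral.integral_const_mul, ← intervalIntegral.integral_const_mul]
  refine intervalIntegral.integral_congr fun t ht => ?_
  rw [Set.uIcc_of_le zero_le_one] at ht
  have hpow : S ^ α = S * S ^ (α - 1) := by
    rw [mul_comm, ← rpow_add_one hT.ne', sub_add_cancel]
  simp only [mul_rpow hT.le ht.1, hpow]
  ring

/-- The improper distributional differintegral of order `α ∈ (0,1)` of `cos(λz)` exists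
and equals `λ^(−α) cos(λz − απ/2)`. -/
theorem differintegral_cos (lam α x : ℝ) (hlam : 0 < lam) (hα0 : 0 < α) (hα1 : α < 1) :
    Tendsto (fun T : ℝ => (1 / Real.Gamma α) * ∫ τ in (-T)..x,
        Real.cos (lam * τ) * (x - τ) ^ (α - 1)) atTop
      (𝓝 (lam ^ (-α) * Real.cos (lam * x - α * π / 2))) := by
  have hR : Tendsto (fun T : ℝ => lam * (x + T)) atTop atTop :=
    (tendsto_atTop_add_const_left atTop x tendsto_id).const_mul_atTop hlam
  have hlim := ((tendsto_rpow_mul_scaledLowerGamma_mul_I hα0 hα1).comp hR).const_mul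
    (Complex.exp ((lam * x : ℝ) * Complex.I))
  have hreal := (((Complex.continuous_re.tendsto _).comp hlim).const_mul
    (lam ^ (-α))).const_mul (1 / Real.Gamma α)
  have hval : 1 / Real.Gamma α * (lam ^ (-α) * (Complex.exp ((lam * x : ℝ) * Complex.I) *
      (Complex.exp (-((α * (π / 2) : ℝ) * Complex.I)) * Real.Gamma α)).re) =
      lam ^ (-α) * Real.cos (lam * x - α * π / 2) := by
    have hexp : Complex.exp ((lam * x : ℝ) * Complex.I) *
        (Complex.exp (-((α * (π / 2) : ℝ) * Complex.I)) * Real.Gamma α) =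
        (Real.Gamma α : ℂ) * Complex.exp ((lam * x - α * π / 2 : ℝ) * Complex.I) := by
      rw [← mul_assoc, ← Complex.exp_add, mul_comm]
      push_cast
      ring_nf
    rw [hexp, Complex.re_ofReal_mul, Complex.exp_ofReal_mul_I_re]
    have := (Real.Gamma_pos_of_pos hα0).ne'
    field_simp
  rw [hval] at hreal
  refine hreal.congr' ?_
  filter_upwards [eventually_gt_atTop (-x)] with T hT
  rw [integral_cos_mul_rpow_eq hlam hα0 (by linarith)]
  rfl
end
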